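/- arXiv:1403.4371 — 7 statements merged into one kernel-verified Lean document; each statement's English description precedes it below -/
import Mathlib

section
/- Let ξ ∈ ℂ be a primitive n-th root of unity and g = (ξ, ξ, ξ^{-1}, ξ^{-1}) ∈ (ℂ*)^4. For any v, v' ∈ (ℂ*)^4, one has p_n(v) = p_n(v') if and only if v' = g^k · v (componentwise multiplication) for some integer k with 0 ≤ k ≤ n−1. In other words, the fibers of p_n are exactly the orbits of the ℤ/nℤ-action generated by translation by g. -/
/-- The group `(ℂ*)^4` of quadruples of nonzero complex numbers under
componentwise multiplication. -/
abbrev TorusFour : Type := ℂˣ × ℂˣ × ℂˣ × ℂˣ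

/-- The map `p_n(w, x, y, z) = (wⁿ, w/x, w·y, w·z)`. -/
def pUnits (n : ℕ) (v : TorusFour) : TorusFour :=
  (v.1 ^ n, v.1 / v.2.1, v.1 * v.2.2.1, v.1 * v.2.2.2)

/-! The map `p_n` is a homomorphism, so its fibers are the cosets of its kernel. The last three
coordinates of `p_n v = 1` express `v` through its first coordinate `u` as `(u, u, u⁻¹, u⁻¹)`, and
the first one says `uⁿ = 1`. So the kernel is a copy of the group of `n`-th roots of unity, which
`ξ` generates. -/

section CommGroup

variable (G : Type*) [CommGroup G]

/-- The map `p_n(w, x, y, z) = (wⁿ, w/x, w·y, w·z)` over an arbitrary commutative group `G`, as a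
group homomorphism; for `G = ℂˣ` its underlying function is `pUnits n`. -/
@[simps]
def pUnitsHom (n : ℕ) : G × G × G × G →* G × G × G × G where
  toFun v := (v.1 ^ n, v.1 / v.2.1, v.1 * v.2.2.1, v.1 * v.2.2.2)
  map_one' := by simp
  map_mul' v v' := by simp [mul_pow, mul_div_mul_comm, mul_mul_mul_comm]

/-- The embedding `u ↦ (u, u, u⁻¹, u⁻¹)` of a commutative group `G` into `G⁴`; it sends the root of
unity `ξ` to the generator `g` of the deck group of `p_n`. -/
@[simps]
def twistedDiagonal : G →* G × G × G × G where
  toFun u := (u, u, u⁻¹, u⁻¹)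
  map_one' := by simp
  map_mul' u u' := by simp [mul_comm]

variable {G}

theorem twistedDiagonal_injective : Function.Injective (twistedDiagonal G) :=
  fun _ _ h => congrArg Prod.fst h

theorem ker_pUnitsHom (n : ℕ) :
    (pUnitsHom G n).ker = (powMonoidHom n : G →* G).ker.map (twistedDiagonal G) := by
  ext ⟨w, x, y, z⟩
  simp only [MonoidHom.mem_ker, Subgroup.mem_map, pUnitsHom_apply, twistedDiagonal_apply,
    powMonoidHom_apply, Prod.mk_eq_one, Prod.mk.injEq, div_eq_one, mul_eq_one_iff_inv_eq]
  constructor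
  · rintro ⟨hw, hx, hy, hz⟩
    exact ⟨w, hw, rfl, hx, hy, hz⟩
  · rintro ⟨w, hw, rfl, hx, hy, hz⟩
    exact ⟨hw, hx, hy, hz⟩

end CommGroup

theorem map_eq_map_iff_exists_pow_mul_of_ker_eq_zpowers {G H : Type*} [Group G] [Group H]
    {f : G →* H} {g : G} (hf : f.ker = Subgroup.zpowers g) (hg : IsOfFinOrder g) (v v' : G) :
    f v = f v' ↔ ∃ k < orderOf g, v' = g ^ k * v := by
  classical
  calc f v = f v' ↔ v' * v⁻¹ ∈ Subgroup.zpowers g := by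
        rw [← hf, MonoidHom.mem_ker, map_mul, map_inv, mul_inv_eq_one, eq_comm]
    _ ↔ ∃ k < orderOf g, v' = g ^ k * v := by
        simp [hg.mem_zpowers_iff_mem_range_orderOf, eq_mul_inv_iff_mul_eq, eq_comm]

section IsDomain

variable {R : Type*} [CommRing R] [IsDomain R] {n : ℕ} {ξ : Rˣ}

theorem ker_pUnitsHom_units_eq_zpowers [NeZero n] (hξ : IsPrimitiveRoot ξ n) :
    (pUnitsHom Rˣ n).ker = Subgroup.zpowers (twistedDiagonal Rˣ ξ) := by
  rw [ker_pUnitsHom, ← rootsOfUnity_eq_ker, ← hξ.zpowers_eq, MonoidHom.map_zpowers]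

theorem pUnits_fibers_eq_orbits_general (hn : 1 ≤ n) (hξ : IsPrimitiveRoot (ξ : R) n)
    (v v' : Rˣ × Rˣ × Rˣ × Rˣ) :
    pUnitsHom Rˣ n v = pUnitsHom Rˣ n v' ↔
      ∃ k : ℕ, k ≤ n - 1 ∧ v' = (ξ, ξ, ξ⁻¹, ξ⁻¹) ^ k * v := by
  have : NeZero n := ⟨by lia⟩
  have hξ_units : IsPrimitiveRoot ξ n := IsPrimitiveRoot.coe_units_iff.mp hξ
  have hg : IsPrimitiveRoot (twistedDiagonal Rˣ ξ) n :=
    hξ_units.map_of_injective twistedDiagonal_injective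
  rw [map_eq_map_iff_exists_pow_mul_of_ker_eq_zpowers
    (ker_pUnitsHom_units_eq_zpowers hξ_units) (hg.isOfFinOrder (NeZero.ne n)), ← hg.eq_orderOf]
  simp only [twistedDiagonal_apply, Nat.le_sub_one_iff_lt hn]

end IsDomain

/-- Let `ξ ∈ ℂ` be a primitive `n`-th root of unity and
`g = (ξ, ξ, ξ⁻¹, ξ⁻¹) ∈ (ℂ*)^4`. For any `v, v' ∈ (ℂ*)^4` one has
`p_n(v) = p_n(v')` if and only if `v' = gᵏ · v` for some integer `k` with
`0 ≤ k ≤ n - 1`: the fibers of `p_n` are exactly the orbits of the `ℤ/nℤ`-action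
generated by translation by `g`. -/
theorem pUnits_fibers_eq_orbits (n : ℕ) (hn : 1 ≤ n) (ξ : ℂˣ)
    (hξ : IsPrimitiveRoot (ξ : ℂ) n) (v v' : TorusFour) :
    pUnits n v = pUnits n v' ↔
      ∃ k : ℕ, k ≤ n - 1 ∧ v' = ((ξ, ξ, ξ⁻¹, ξ⁻¹) : TorusFour) ^ k * v :=
  pUnits_fibers_eq_orbits_general hn hξ v v'
end

section
/- Let n be an odd positive integer, ξ ∈ ℂ a primitive n-th root of unity, and 1 ≤ i ≤ n−1. Then the intersection U ∩ g^i·U consists of exactly one point, namely P_i = (ξ^i/(1+ξ^i), ξ^i/(1+ξ^i), 1/(1+ξ^i), 1/(1+ξ^i)). Here g^i·U denotes the translate {g^i · u : u ∈ U} under componentwise multiplication, which equals {(w, x, y, z) ∈ (ℂ*)^4 : ξ^{-i}w + ξ^i y = 1, ξ^{-i}x + ξ^i z = 1}. -/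
noncomputable section

/-- The surface `U = {(w,x,y,z) ∈ (ℂ*)^4 : w + y = 1, x + z = 1}`, as a set of
quadruples of (nonzero) complex numbers. -/
def U : Set (ℂ × ℂ × ℂ × ℂ) :=
  {p | p.1 ≠ 0 ∧ p.2.1 ≠ 0 ∧ p.2.2.1 ≠ 0 ∧ p.2.2.2 ≠ 0 ∧
    p.1 + p.2.2.1 = 1 ∧ p.2.1 + p.2.2.2 = 1}

/-- Translation of a subset of `(ℂ*)^4` by `(c, c, c⁻¹, c⁻¹)` under componentwise
multiplication; for `c = ξ^i` and `g = (ξ, ξ, ξ⁻¹, ξ⁻¹)` this is the gTranslate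
`g^i · S = {g^i · u : u ∈ S}`. -/
def gTranslate (c : ℂ) (S : Set (ℂ × ℂ × ℂ × ℂ)) : Set (ℂ × ℂ × ℂ × ℂ) :=
  (fun p => (c * p.1, c * p.2.1, c⁻¹ * p.2.2.1, c⁻¹ * p.2.2.2)) '' S

/-- The point `P_k = (ξ^k/(1+ξ^k), ξ^k/(1+ξ^k), 1/(1+ξ^k), 1/(1+ξ^k))`. -/
def P (ξ : ℂ) (k : ℕ) : ℂ × ℂ × ℂ × ℂ :=
  (ξ ^ k / (1 + ξ ^ k), ξ ^ k / (1 + ξ ^ k), 1 / (1 + ξ ^ k), 1 / (1 + ξ ^ k))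

/-- The map `p_n(w, x, y, z) = (wⁿ, w/x, w·y, w·z)`. -/
def pmap (n : ℕ) (p : ℂ × ℂ × ℂ × ℂ) : ℂ × ℂ × ℂ × ℂ :=
  (p.1 ^ n, p.1 / p.2.1, p.1 * p.2.2.1, p.1 * p.2.2.2)

/-!
Put `c = ξ ^ i`. The equations of `U` and of its translate split into two copies, in `(w, y)` and in
`(x, z)`, of the linear system `w + y = 1`, `c⁻¹ * w + c * y = 1`, whose determinant `c - c⁻¹` is
nonzero unless `c ^ 2 = 1`. For a root of unity `c` of odd order this only happens at `c = 1`.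
-/

theorem sq_pow_eq_one_iff_dvd_of_odd {M : Type*} [CommMonoid M] {ζ : M} {n : ℕ}
    (hζ : IsPrimitiveRoot ζ n) (hn : Odd n) (i : ℕ) : (ζ ^ i) ^ 2 = 1 ↔ n ∣ i := by
  rw [← pow_mul, hζ.pow_eq_one_iff_dvd, hn.coprime_two_right.dvd_mul_right]

theorem one_add_ne_zero_of_sq_ne_one {R : Type*} [CommRing R] {c : R} (hc : c ^ 2 ≠ 1) :
    1 + c ≠ 0 :=
  fun h => hc (by linear_combination (c - 1) * h)

theorem add_eq_one_and_inv_mul_add_mul_eq_one_iff {K : Type*} [Field K] {c w y : K}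
    (hc₀ : c ≠ 0) (hc : c ^ 2 ≠ 1) :
    w + y = 1 ∧ c⁻¹ * w + c * y = 1 ↔ w = c / (1 + c) ∧ y = 1 / (1 + c) := by
  have hc_add : 1 + c ≠ 0 := one_add_ne_zero_of_sq_ne_one hc
  constructor
  · rintro ⟨hU, hcU⟩
    have hcU' : w + c ^ 2 * y = c := by
      field_simp at hcU
      exact hcU
    have hy : y = 1 / (1 + c) := by
      rw [eq_div_iff hc_add]
      have hc_sub : c - 1 ≠ 0 := sub_ne_zero.mpr fun h => hc (by rw [h, one_pow])
      apply mul_left_cancel₀ hc_sub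
      linear_combination hcU' - hU
    refine ⟨?_, hy⟩
    rw [eq_sub_of_add_eq hU, hy, one_sub_div hc_add, add_sub_cancel_left]
  · rintro ⟨rfl, rfl⟩
    constructor
    · rw [← add_div, add_comm c, div_self hc_add]
    · field_simp

theorem mem_gTranslate_iff {c : ℂ} (hc : c ≠ 0) {S : Set (ℂ × ℂ × ℂ × ℂ)} {p : ℂ × ℂ × ℂ × ℂ} :
    p ∈ gTranslate c S ↔ (c⁻¹ * p.1, c⁻¹ * p.2.1, c * p.2.2.1, c * p.2.2.2) ∈ S :=
  Set.mem_image_iff_of_inverse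
    (g := fun p : ℂ × ℂ × ℂ × ℂ => (c⁻¹ * p.1, c⁻¹ * p.2.1, c * p.2.2.1, c * p.2.2.2))
    (fun p => by simp only [inv_mul_cancel_left₀ hc, mul_inv_cancel_left₀ hc])
    (fun p => by simp only [inv_mul_cancel_left₀ hc, mul_inv_cancel_left₀ hc])

theorem gTranslate_U_eq {c : ℂ} (hc : c ≠ 0) :
    gTranslate c U =
      {p : ℂ × ℂ × ℂ × ℂ | p.1 ≠ 0 ∧ p.2.1 ≠ 0 ∧ p.2.2.1 ≠ 0 ∧ p.2.2.2 ≠ 0 ∧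
        c⁻¹ * p.1 + c * p.2.2.1 = 1 ∧ c⁻¹ * p.2.1 + c * p.2.2.2 = 1} := by
  ext p
  simp only [mem_gTranslate_iff hc, U, Set.mem_ofPred_eq, ne_eq, mul_eq_zero, inv_eq_zero,
    hc, false_or]

theorem inter_translate_eq_singleton_general {c : ℂ} (hc₀ : c ≠ 0) (hc : c ^ 2 ≠ 1) :
    U ∩ gTranslate c U = {(c / (1 + c), c / (1 + c), 1 / (1 + c), 1 / (1 + c))} ∧
    gTranslate c U =
      {p : ℂ × ℂ × ℂ × ℂ | p.1 ≠ 0 ∧ p.2.1 ≠ 0 ∧ p.2.2.1 ≠ 0 ∧ p.2.2.2 ≠ 0 ∧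
        c⁻¹ * p.1 + c * p.2.2.1 = 1 ∧ c⁻¹ * p.2.1 + c * p.2.2.2 = 1} := by
  refine ⟨?_, gTranslate_U_eq hc₀⟩
  have solve {w y : ℂ} := add_eq_one_and_inv_mul_add_mul_eq_one_iff (w := w) (y := y) hc₀ hc
  rw [gTranslate_U_eq hc₀]
  ext ⟨w, x, y, z⟩
  simp only [U, Set.mem_inter_iff, Set.mem_ofPred_eq, Set.mem_singleton_iff, Prod.mk.injEq]
  constructor
  · rintro ⟨⟨-, -, -, -, hwy, hxz⟩, -, -, -, -, hwy', hxz'⟩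
    obtain ⟨hw, hy⟩ := solve.mp ⟨hwy, hwy'⟩
    obtain ⟨hx, hz⟩ := solve.mp ⟨hxz, hxz'⟩
    exact ⟨hw, hx, hy, hz⟩
  · rintro ⟨rfl, rfl, rfl, rfl⟩
    have hc_add : 1 + c ≠ 0 := one_add_ne_zero_of_sq_ne_one hc
    have hw : c / (1 + c) ≠ 0 := div_ne_zero hc₀ hc_add
    have hy : 1 / (1 + c) ≠ 0 := one_div_ne_zero hc_add
    obtain ⟨hU, hcU⟩ := solve.mpr ⟨rfl, rfl⟩
    exact ⟨⟨hw, hw, hy, hy, hU, hU⟩, hw, hw, hy, hy, hcU, hcU⟩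

/-- Let `n` be an odd positive integer, `ξ` a primitive `n`-th root
of unity, and `1 ≤ i ≤ n - 1`. Then `U ∩ g^i·U` consists of exactly one point,
namely `P_i = (ξ^i/(1+ξ^i), ξ^i/(1+ξ^i), 1/(1+ξ^i), 1/(1+ξ^i))`; moreover the
translate `g^i·U = {g^i · u : u ∈ U}` equals
`{(w,x,y,z) ∈ (ℂ*)^4 : ξ⁻ⁱw + ξⁱy = 1, ξ⁻ⁱx + ξⁱz = 1}`. -/
theorem inter_translate_eq_singleton (n : ℕ) (hpos : 0 < n) (hodd : Odd n) (ξ : ℂ)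
    (hξ : IsPrimitiveRoot ξ n) (i : ℕ) (h1 : 1 ≤ i) (h2 : i ≤ n - 1) :
    U ∩ gTranslate (ξ ^ i) U = {P ξ i} ∧
    gTranslate (ξ ^ i) U =
      {p : ℂ × ℂ × ℂ × ℂ | p.1 ≠ 0 ∧ p.2.1 ≠ 0 ∧ p.2.2.1 ≠ 0 ∧ p.2.2.2 ≠ 0 ∧
        (ξ ^ i)⁻¹ * p.1 + ξ ^ i * p.2.2.1 = 1 ∧
        (ξ ^ i)⁻¹ * p.2.1 + ξ ^ i * p.2.2.2 = 1} :=
  inter_translate_eq_singleton_general (pow_ne_zero i (hξ.ne_zero hpos.ne')) <|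
    mt (sq_pow_eq_one_iff_dvd_of_odd hξ hodd i).mp (Nat.not_dvd_of_pos_of_lt h1 (by lia))
end
end

section
/- Let n be an odd positive integer, ξ ∈ ℂ a primitive n-th root of unity, and 1 ≤ i < j ≤ n−1. Then the triple intersection U ∩ g^i·U ∩ g^j·U is empty, where g^k·U denotes the translate {g^k · u : u ∈ U} under componentwise multiplication. -/
noncomputable section

theorem gTranslate_one (S : Set (ℂ × ℂ × ℂ × ℂ)) : gTranslate 1 S = S := by
  simp [gTranslate]

theorem third_ne_zero_of_mem_gTranslate_U {c : ℂ} (hc : c ≠ 0) {p : ℂ × ℂ × ℂ × ℂ}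
    (hp : p ∈ gTranslate c U) : p.2.2.1 ≠ 0 := by
  obtain ⟨-, -, hy, -⟩ := (mem_gTranslate_iff hc).1 hp
  exact right_ne_zero_of_mul hy

theorem quadratic_eq_zero_of_mem_gTranslate_U {c : ℂ} (hc : c ≠ 0) {p : ℂ × ℂ × ℂ × ℂ}
    (hp : p ∈ gTranslate c U) : p.2.2.1 * c ^ 2 + -1 * c + p.1 = 0 := by
  obtain ⟨-, -, -, -, hwy, -⟩ := (mem_gTranslate_iff hc).1 hp
  have hwy : c⁻¹ * p.1 + c * p.2.2.1 = 1 := hwy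
  linear_combination c * hwy - p.1 * mul_inv_cancel₀ hc

theorem mul_add_eq_neg_of_quadratic_eq_zero {R : Type*} [CommRing R] [NoZeroDivisors R]
    {a b c s t : R} (hs : a * s ^ 2 + b * s + c = 0) (ht : a * t ^ 2 + b * t + c = 0)
    (hst : s ≠ t) :
    a * (s + t) = -b :=
  mul_left_cancel₀ (sub_ne_zero.2 hst) (by linear_combination hs - ht)

theorem triple_intersection_empty_general {a b c : ℂ} (ha : a ≠ 0) (hb : b ≠ 0) (hc : c ≠ 0)
    (hab : a ≠ b) (hac : a ≠ c) (hbc : b ≠ c) :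
    gTranslate a U ∩ gTranslate b U ∩ gTranslate c U = ∅ := by
  refine Set.eq_empty_of_forall_notMem ?_
  rintro p ⟨⟨hpa, hpb⟩, hpc⟩
  have hqa := quadratic_eq_zero_of_mem_gTranslate_U ha hpa
  have hsum_ab := mul_add_eq_neg_of_quadratic_eq_zero hqa
    (quadratic_eq_zero_of_mem_gTranslate_U hb hpb) hab
  have hsum_ac := mul_add_eq_neg_of_quadratic_eq_zero hqa
    (quadratic_eq_zero_of_mem_gTranslate_U hc hpc) hac
  have hsum : a + b = a + c :=
    mul_left_cancel₀ (third_ne_zero_of_mem_gTranslate_U ha hpa) (hsum_ab.trans hsum_ac.symm)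
  exact hbc (add_left_cancel hsum)

/-- Let `n` be an odd positive integer, `ξ` a primitive `n`-th root
of unity, and `1 ≤ i < j ≤ n - 1`. Then the triple intersection
`U ∩ g^i·U ∩ g^j·U` is empty, where `g^k·U` denotes the translate
`{g^k · u : u ∈ U}` under componentwise multiplication by
`g^k = (ξ^k, ξ^k, ξ^{-k}, ξ^{-k})`. -/
theorem triple_intersection_empty (n : ℕ) (hpos : 0 < n) (hodd : Odd n) (ξ : ℂ)
    (hξ : IsPrimitiveRoot ξ n) (i j : ℕ) (h1 : 1 ≤ i) (hij : i < j) (h2 : j ≤ n - 1) :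
    U ∩ gTranslate (ξ ^ i) U ∩ gTranslate (ξ ^ j) U = ∅ := by
  have hξ0 : ξ ≠ 0 := hξ.ne_zero hpos.ne'
  have pow_ne_pow {k l : ℕ} (hkl : k < l) (hl : l ≤ n - 1) : ξ ^ k ≠ ξ ^ l := fun h =>
    hkl.ne (hξ.pow_inj (by omega) (by omega) h)
  simpa only [pow_zero, gTranslate_one] using
    triple_intersection_empty_general (pow_ne_zero 0 hξ0) (pow_ne_zero i hξ0) (pow_ne_zero j hξ0)
      (pow_ne_pow h1 (hij.le.trans h2)) (pow_ne_pow (h1.trans hij.le) h2) (pow_ne_pow hij h2)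
end
end

section
/- Let n be an odd positive integer, ξ ∈ ℂ a primitive n-th root of unity, and g = (ξ, ξ, ξ^{-1}, ξ^{-1}) ∈ (ℂ*)^4. Then the restriction of p_n to U ∖ ⋃_{i=1}^{n−1} (U ∩ g^i·U) is injective. -/
noncomputable section

/-! On the locus `w, x ≠ 0` the fibres of `p_n` are exactly the orbits of the group of `n`-th roots
of unity acting through `c ↦ (c, c, c⁻¹, c⁻¹)`, which is generated by `g`. So if distinct points
`p`, `q` of a set `S` in this locus have the same image, then `p = g ^ i · q` with `0 < i < n`, and
`p` lies in the removed set `S ∩ g ^ i · S`. -/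

/-- The action of `(c, c, c⁻¹, c⁻¹)` on a single point: the pointwise version of `gTranslate c`,
describing the fibres of `pmap n` when `c ^ n = 1`. -/
def gScale (c : ℂ) (p : ℂ × ℂ × ℂ × ℂ) : ℂ × ℂ × ℂ × ℂ :=
  (c * p.1, c * p.2.1, c⁻¹ * p.2.2.1, c⁻¹ * p.2.2.2)

theorem gScale_one (p : ℂ × ℂ × ℂ × ℂ) : gScale 1 p = p := by
  simp [gScale]

theorem gScale_mem_gTranslate (c : ℂ) {S : Set (ℂ × ℂ × ℂ × ℂ)} {p : ℂ × ℂ × ℂ × ℂ}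
    (hp : p ∈ S) : gScale c p ∈ gTranslate c S :=
  Set.mem_image_of_mem (gScale c) hp

theorem pmap_gScale {n : ℕ} (hn : n ≠ 0) {c : ℂ} (hc : c ^ n = 1) (p : ℂ × ℂ × ℂ × ℂ) :
    pmap n (gScale c p) = pmap n p := by
  have hc0 : c ≠ 0 := by
    rintro rfl
    simp [hn] at hc
  have cancel (a b : ℂ) : c * a * (c⁻¹ * b) = a * b := by
    rw [mul_mul_mul_comm, mul_inv_cancel₀ hc0, one_mul]
  simp only [pmap, gScale, mul_pow, hc, one_mul, mul_div_mul_left _ _ hc0, cancel]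

theorem pmap_eq_pmap_iff {n : ℕ} (hn : n ≠ 0) {p q : ℂ × ℂ × ℂ × ℂ}
    (hp : p.1 ≠ 0 ∧ p.2.1 ≠ 0) (hq : q.1 ≠ 0 ∧ q.2.1 ≠ 0) :
    pmap n p = pmap n q ↔ ∃ c : ℂ, c ^ n = 1 ∧ p = gScale c q := by
  refine ⟨fun h => ?_, fun ⟨c, hc, hpq⟩ => hpq ▸ pmap_gScale hn hc q⟩
  obtain ⟨w, x, y, z⟩ := p
  obtain ⟨w', x', y', z'⟩ := q
  obtain ⟨hw, hx⟩ : w ≠ 0 ∧ x ≠ 0 := hp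
  obtain ⟨hw', hx'⟩ : w' ≠ 0 ∧ x' ≠ 0 := hq
  simp only [pmap, Prod.mk.injEq] at h
  obtain ⟨hpow, hdiv, hy, hz⟩ := h
  have hwx : w * x' = w' * x := (div_eq_div_iff hx hx').1 hdiv
  have hc : (w / w') ^ n = 1 := by rw [div_pow, hpow, div_self (pow_ne_zero n hw')]
  have hw_eq : w = w / w' * w' := (div_mul_cancel₀ w hw').symm
  have hx_eq : x = w / w' * x' := by
    rw [div_mul_eq_mul_div, hwx, mul_div_cancel_left₀ x hw']
  have hy_eq : y = (w / w')⁻¹ * y' := by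
    rw [inv_div, div_mul_eq_mul_div, ← hy, mul_div_cancel_left₀ y hw]
  have hz_eq : z = (w / w')⁻¹ * z' := by
    rw [inv_div, div_mul_eq_mul_div, ← hz, mul_div_cancel_left₀ z hw]
  exact ⟨w / w', hc, Prod.ext hw_eq (Prod.ext hx_eq (Prod.ext hy_eq hz_eq))⟩

theorem pmap_injOn_complement_general {n : ℕ} (hpos : 0 < n) {ξ : ℂ} (hξ : IsPrimitiveRoot ξ n)
    {S : Set (ℂ × ℂ × ℂ × ℂ)} (hS : ∀ p ∈ S, p.1 ≠ 0 ∧ p.2.1 ≠ 0) :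
    Set.InjOn (pmap n) (S \ ⋃ i ∈ Set.Icc 1 (n - 1), (S ∩ gTranslate (ξ ^ i) S)) := by
  rintro p ⟨hp, hp_notMem⟩ q ⟨hq, -⟩ hpq
  have : NeZero n := ⟨hpos.ne'⟩
  obtain ⟨c, hc, rfl⟩ := (pmap_eq_pmap_iff hpos.ne' (hS p hp) (hS q hq)).1 hpq
  obtain ⟨i, hin, rfl⟩ := hξ.eq_pow_of_pow_eq_one hc
  obtain rfl | hi := i.eq_zero_or_pos
  · rw [pow_zero, gScale_one]
  · have hi_mem : i ∈ Set.Icc 1 (n - 1) := ⟨hi, Nat.le_sub_one_of_lt hin⟩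
    exact (hp_notMem (Set.mem_biUnion hi_mem ⟨hp, gScale_mem_gTranslate (ξ ^ i) hq⟩)).elim

/-- Let `n` be an odd positive integer, `ξ` a primitive `n`-th root
of unity, and `g = (ξ, ξ, ξ⁻¹, ξ⁻¹)`. Then the restriction of `p_n` to
`U ∖ ⋃_{i=1}^{n-1} (U ∩ g^i·U)` is injective. -/
theorem pmap_injOn_complement (n : ℕ) (hpos : 0 < n) (hodd : Odd n) (ξ : ℂ)
    (hξ : IsPrimitiveRoot ξ n) :
    Set.InjOn (pmap n) (U \ ⋃ i ∈ Set.Icc 1 (n - 1), (U ∩ gTranslate (ξ ^ i) U)) := by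
  exact pmap_injOn_complement_general hpos hξ fun _ ⟨hw, hx, _⟩ => ⟨hw, hx⟩
end
end

section
/- Let n be an odd positive integer, ξ ∈ ℂ a primitive n-th root of unity, and 1 ≤ i ≤ n−1. Then the fiber of p_n over p_n(P_i) intersected with U consists of exactly the two points P_i and P_{n−i}; that is, {u ∈ U : p_n(u) = p_n(P_i)} = {P_i, P_{n−i}}, and P_i ≠ P_{n−i}. -/
noncomputable section

/-! A point of `U` with `w / x = 1` is determined by `w`, since then `x = w` and `y = z = 1 - w`.
Both `P_i` and `P_{n-i}` are of this kind, with first coordinates exchanged by `w ↦ 1 - w`. On such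
points the third coordinate of `p_n` is `w * (1 - w)`, which leaves only `w` and `1 - w`, and the
first coordinate does not separate them because their quotient `ξ ^ i` is an `n`-th root of unity.
-/

theorem mul_one_sub_eq_mul_one_sub_iff {R : Type*} [CommRing R] [NoZeroDivisors R] {s t : R} :
    s * (1 - s) = t * (1 - t) ↔ s = t ∨ s = 1 - t := by
  have factorization : s * (1 - s) - t * (1 - t) = (s - t) * (1 - t - s) := by ring
  rw [← sub_eq_zero, factorization, mul_eq_zero, sub_eq_zero, sub_eq_zero, eq_comm (a := 1 - t)]

theorem one_add_ne_zero_of_odd_of_pow_eq_one {R : Type*} [Ring R] [NeZero (2 : R)]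
    {n : ℕ} (hn : Odd n) {a : R} (ha : a ^ n = 1) : 1 + a ≠ 0 := by
  intro h
  rw [← neg_eq_of_add_eq_zero_right h, hn.neg_one_pow, neg_eq_iff_add_eq_zero,
    one_add_one_eq_two] at ha
  exact two_ne_zero ha

theorem pow_ne_zero_of_pow_eq_one {M : Type*} [MonoidWithZero M] [Nontrivial M] {a : M} {m n : ℕ}
    (ha : a ^ n = 1) (hm : m ≤ n) : a ^ m ≠ 0 :=
  right_ne_zero_of_mul_eq_one ((pow_sub_mul_pow a hm).trans ha)

section DivOneAdd

variable {K : Type*} [DivisionRing K] {a : K}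

theorem one_sub_div_one_add (h : 1 + a ≠ 0) : 1 - a / (1 + a) = 1 / (1 + a) := by
  rw [one_sub_div h, add_sub_cancel_right]

theorem inv_div_one_add_inv (ha : a ≠ 0) : a⁻¹ / (1 + a⁻¹) = 1 / (1 + a) := by
  rw [div_eq_mul_inv, ← mul_inv_rev, add_mul, one_mul, inv_mul_cancel₀ ha, add_comm, one_div]

end DivOneAdd

/-- The point `(t, t, 1 - t, 1 - t)`. For `t ≠ 0, 1` these are the points of `U` with
`w / x = 1`. -/
def diagPoint (t : ℂ) : ℂ × ℂ × ℂ × ℂ :=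
  (t, t, 1 - t, 1 - t)

theorem diagPoint_injective : Function.Injective diagPoint :=
  fun _ _ h => congrArg Prod.fst h

theorem diagPoint_mem_U {t : ℂ} (h₀ : t ≠ 0) (h₁ : 1 - t ≠ 0) : diagPoint t ∈ U :=
  ⟨h₀, h₀, h₁, h₁, add_sub_cancel t 1, add_sub_cancel t 1⟩

theorem eq_diagPoint_of_mem_U_of_div_eq_one {u : ℂ × ℂ × ℂ × ℂ} (hu : u ∈ U) (h : u.1 / u.2.1 = 1) :
    u = diagPoint u.1 := by
  obtain ⟨w, x, y, z⟩ := u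
  obtain ⟨-, hx, -, -, hwy, hxz⟩ := hu
  obtain rfl : w = x := (div_eq_one_iff_eq hx).mp h
  obtain rfl : y = 1 - w := eq_sub_of_add_eq' hwy
  obtain rfl : z = 1 - w := eq_sub_of_add_eq' hxz
  rfl

theorem pmap_diagPoint (n : ℕ) {t : ℂ} (ht : t ≠ 0) :
    pmap n (diagPoint t) = (t ^ n, 1, t * (1 - t), t * (1 - t)) := by
  simp only [pmap, diagPoint, div_self ht]

theorem fiber_pmap_diagPoint {n : ℕ} {t : ℂ} (h₀ : t ≠ 0) (h₁ : 1 - t ≠ 0)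
    (hpow : (1 - t) ^ n = t ^ n) :
    {u ∈ U | pmap n u = pmap n (diagPoint t)} = {diagPoint t, diagPoint (1 - t)} := by
  rw [pmap_diagPoint n h₀]
  apply Set.Subset.antisymm
  · rintro u ⟨hu, hfiber⟩
    have hdiag : u = diagPoint u.1 :=
      eq_diagPoint_of_mem_U_of_div_eq_one hu (congrArg (fun p => p.2.1) hfiber)
    have hprod : u.1 * (1 - u.1) = t * (1 - t) := by
      rw [hdiag] at hfiber
      exact congrArg (fun p => p.2.2.1) hfiber
    rw [hdiag]
    exact (mul_one_sub_eq_mul_one_sub_iff.mp hprod).imp (congrArg diagPoint) (congrArg diagPoint)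
  · rintro _ (rfl | rfl)
    · exact ⟨diagPoint_mem_U h₀ h₁, pmap_diagPoint n h₀⟩
    · refine ⟨diagPoint_mem_U h₁ (by rwa [sub_sub_cancel]), ?_⟩
      rw [pmap_diagPoint n h₁, hpow, sub_sub_cancel, mul_comm]

theorem P_eq_diagPoint {ξ : ℂ} {k : ℕ} (h : 1 + ξ ^ k ≠ 0) :
    P ξ k = diagPoint (ξ ^ k / (1 + ξ ^ k)) := by
  simp only [P, diagPoint, one_sub_div_one_add h]

theorem P_sub_eq_diagPoint {n i : ℕ} {ξ : ℂ} (hξ : ξ ^ n = 1) (hi : i ≤ n) (h : 1 + ξ ^ i ≠ 0) :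
    P ξ (n - i) = diagPoint (1 - ξ ^ i / (1 + ξ ^ i)) := by
  have hmul : ξ ^ (n - i) * ξ ^ i = 1 := (pow_sub_mul_pow ξ hi).trans hξ
  have hinv : ξ ^ (n - i) = (ξ ^ i)⁻¹ := eq_inv_of_mul_eq_one_left hmul
  have hadd : 1 + ξ ^ (n - i) ≠ 0 := by
    intro hzero
    apply h
    linear_combination ξ ^ i * hzero - hmul
  rw [P_eq_diagPoint hadd, hinv, inv_div_one_add_inv (pow_ne_zero_of_pow_eq_one hξ hi),
    one_sub_div_one_add h]

theorem fiber_eq_pair_general {n i : ℕ} {ξ : ℂ} (hξ : ξ ^ n = 1) (hi : i ≤ n) (hne : ξ ^ i ≠ 1)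
    (hadd : 1 + ξ ^ i ≠ 0) :
    {u ∈ U | pmap n u = pmap n (P ξ i)} = {P ξ i, P ξ (n - i)} ∧ P ξ i ≠ P ξ (n - i) := by
  have hsub : 1 - ξ ^ i / (1 + ξ ^ i) = 1 / (1 + ξ ^ i) := one_sub_div_one_add hadd
  rw [P_sub_eq_diagPoint hξ hi hadd, P_eq_diagPoint hadd]
  constructor
  · apply fiber_pmap_diagPoint (div_ne_zero (pow_ne_zero_of_pow_eq_one hξ hi) hadd)
    · rw [hsub]
      exact one_div_ne_zero hadd
    · rw [hsub, div_pow, div_pow, one_pow, pow_right_comm, hξ, one_pow]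
  · rw [diagPoint_injective.ne_iff, hsub, Ne, div_left_inj' hadd]
    exact hne

/-- Let `n` be an odd positive integer, `ξ` a primitive `n`-th root
of unity, and `1 ≤ i ≤ n - 1`. Then the fiber of `p_n` over `p_n(P_i)`
intersected with `U` consists of exactly the two points `P_i` and `P_{n-i}`:
`{u ∈ U : p_n(u) = p_n(P_i)} = {P_i, P_{n-i}}`, and `P_i ≠ P_{n-i}`. -/
theorem fiber_eq_pair (n : ℕ) (hpos : 0 < n) (hodd : Odd n) (ξ : ℂ)
    (hξ : IsPrimitiveRoot ξ n) (i : ℕ) (h1 : 1 ≤ i) (h2 : i ≤ n - 1) :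
    {u ∈ U | pmap n u = pmap n (P ξ i)} = {P ξ i, P ξ (n - i)} ∧
    P ξ i ≠ P ξ (n - i) :=
  fiber_eq_pair_general hξ.pow_eq_one (by lia) (hξ.pow_ne_one_of_pos_of_lt (by lia) (by lia))
    (one_add_ne_zero_of_odd_of_pow_eq_one hodd (by rw [pow_right_comm, hξ.pow_eq_one, one_pow]))
end
end

section
/- Let n be an odd positive integer and ξ ∈ ℂ a primitive n-th root of unity. Then the set of points of U_n = p_n(U) having at least two preimages in U under p_n is exactly {p_n(P_i) : 1 ≤ i ≤ (n−1)/2}, and this set has exactly (n−1)/2 elements; that is, the set {v ∈ U_n : the fiber p_n^{-1}(v) ∩ U has at least two elements} has cardinality (n−1)/2. -/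
noncomputable section

/-! Since `y = 1 - w` on `U`, the coordinate `w * y` of `pmap n` forces two distinct points of `U`
with the same image to have first coordinates `w` and `1 - w`; the coordinates `w / x` and `w * z`
then force `x = w`. Such a point `(w, w, 1 - w, 1 - w)` is determined by `t = w / (1 - w)`, equality
of the `n`-th powers says that `t` is an `n`-th root of unity, and the other point of the fiber has
parameter `t⁻¹`. Multiple points therefore correspond to the pairs `{t, t⁻¹}` of `n`-th roots of
unity with `t ≠ t⁻¹`, and each such pair contains exactly one power `ξ ^ i` with `0 < 2 * i < n`. -/

section RootsOfUnity

variable {n i : ℕ}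

lemma mem_Icc_half_iff : i ∈ Set.Icc 1 ((n - 1) / 2) ↔ 0 < i ∧ 2 * i < n := by
  rw [Set.mem_Icc]
  omega

lemma sq_pow_ne_one_of_mem_Icc_half {M : Type*} [CommMonoid M] {ξ : M} (hξ : IsPrimitiveRoot ξ n)
    (hi : i ∈ Set.Icc 1 ((n - 1) / 2)) : (ξ ^ i) ^ 2 ≠ 1 := by
  obtain ⟨hi_pos, hi_lt⟩ := mem_Icc_half_iff.mp hi
  rw [← pow_mul']
  exact hξ.pow_ne_one_of_pos_of_lt (by omega) hi_lt

lemma exists_mem_Icc_half_pow_eq_or_mul_pow_eq_one {R : Type*} [CommRing R] [IsDomain R] {ξ t : R}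
    (hn : n ≠ 0) (hξ : IsPrimitiveRoot ξ n) (ht : t ^ n = 1) (ht2 : t ^ 2 ≠ 1) :
    ∃ i ∈ Set.Icc 1 ((n - 1) / 2), ξ ^ i = t ∨ t * ξ ^ i = 1 := by
  have : NeZero n := ⟨hn⟩
  obtain ⟨k, hk, rfl⟩ := hξ.eq_pow_of_pow_eq_one ht
  have hk_pos : k ≠ 0 := by
    rintro rfl
    simp at ht2
  have hk_half : 2 * k ≠ n := by
    rintro rfl
    exact ht2 (by rw [← pow_mul', hξ.pow_eq_one])
  rcases lt_or_gt_of_ne hk_half with hlt | hgt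
  · exact ⟨k, mem_Icc_half_iff.mpr ⟨by omega, hlt⟩, Or.inl rfl⟩
  · refine ⟨n - k, mem_Icc_half_iff.mpr ⟨by omega, by omega⟩, Or.inr ?_⟩
    rw [← pow_add, Nat.add_sub_cancel' hk.le, hξ.pow_eq_one]

lemma eq_of_pow_eq_or_mul_pow_eq_one {M : Type*} [CommMonoid M] {ξ : M} {j : ℕ}
    (hξ : IsPrimitiveRoot ξ n) (hi : i ∈ Set.Icc 1 ((n - 1) / 2))
    (hj : j ∈ Set.Icc 1 ((n - 1) / 2)) (h : ξ ^ i = ξ ^ j ∨ ξ ^ i * ξ ^ j = 1) : i = j := by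
  rw [mem_Icc_half_iff] at hi hj
  rcases h with h | h
  · exact hξ.pow_inj (by omega) (by omega) h
  · rw [← pow_add] at h
    exact absurd h (hξ.pow_ne_one_of_pos_of_lt (by omega) (by omega))

lemma one_add_ne_zero_of_sq_ne_one_s14 {R : Type*} [Ring R] {t : R} (ht : t ^ 2 ≠ 1) : 1 + t ≠ 0 := by
  intro h
  rw [eq_neg_of_add_eq_zero_right h] at ht
  simp at ht

end RootsOfUnity

section DiagonalPoint

/-- The point of the diagonal `w = x`, `y = z` of `U` at which `w / y = t`. The points `P_k` of the
paper are those with `t = ξ ^ k`. At `t = -1` there is no such point, and division by zero makes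
the value `(0, 0, 0, 0)`. -/
def diagonalPoint (t : ℂ) : ℂ × ℂ × ℂ × ℂ :=
  (t / (1 + t), t / (1 + t), 1 / (1 + t), 1 / (1 + t))

variable {n : ℕ} {s t : ℂ}

lemma P_eq_diagonalPoint (ξ : ℂ) (k : ℕ) : P ξ k = diagonalPoint (ξ ^ k) := rfl

lemma diagonalPoint_mem_U (ht0 : t ≠ 0) (ht1 : 1 + t ≠ 0) : diagonalPoint t ∈ U := by
  have hw : t / (1 + t) ≠ 0 := div_ne_zero ht0 ht1
  have hy : 1 / (1 + t) ≠ 0 := one_div_ne_zero ht1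
  have hsum : t / (1 + t) + 1 / (1 + t) = 1 := by rw [← add_div, add_comm, div_self ht1]
  exact ⟨hw, hw, hy, hy, hsum, hsum⟩

lemma diagonalPoint_inv (ht0 : t ≠ 0) :
    diagonalPoint t⁻¹ = (1 / (1 + t), 1 / (1 + t), t / (1 + t), t / (1 + t)) := by
  have hw : t⁻¹ / (1 + t⁻¹) = 1 / (1 + t) := by
    rw [← mul_div_mul_left _ _ ht0, mul_add, mul_inv_cancel₀ ht0, mul_one, add_comm]
  have hy : 1 / (1 + t⁻¹) = t / (1 + t) := by
    rw [← mul_div_mul_left _ _ ht0, mul_add, mul_inv_cancel₀ ht0, mul_one, add_comm]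
  rw [diagonalPoint, hw, hy]

lemma diagonalPoint_ne_diagonalPoint_inv (ht0 : t ≠ 0) (ht : t ^ 2 ≠ 1) :
    diagonalPoint t ≠ diagonalPoint t⁻¹ := by
  intro h
  have hfst : t / (1 + t) = 1 / (1 + t) := by
    rw [diagonalPoint_inv ht0] at h
    exact congrArg Prod.fst h
  rw [div_left_inj' (one_add_ne_zero_of_sq_ne_one_s14 ht)] at hfst
  exact ht (by rw [hfst, one_pow])

lemma pmap_diagonalPoint_inv (ht : t ^ n = 1) :
    pmap n (diagonalPoint t⁻¹) = pmap n (diagonalPoint t) := by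
  rcases eq_or_ne t 0 with rfl | ht0
  · rw [inv_zero]
  · have hw : (1 / (1 + t)) ^ n = (t / (1 + t)) ^ n := by rw [div_pow, div_pow, ht, one_pow]
    have hwx : 1 / (1 + t) / (1 / (1 + t)) = t / (1 + t) / (t / (1 + t)) := by field_simp
    rw [diagonalPoint_inv ht0, diagonalPoint]
    simp only [pmap, hw, hwx, mul_comm (1 / (1 + t))]

lemma eq_or_mul_eq_one_of_pmap_diagonalPoint_eq (hs : 1 + s ≠ 0) (ht : 1 + t ≠ 0)
    (h : pmap n (diagonalPoint s) = pmap n (diagonalPoint t)) : s = t ∨ s * t = 1 := by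
  have hwy : s / (1 + s) * (1 / (1 + s)) = t / (1 + t) * (1 / (1 + t)) :=
    congrArg (fun v => v.2.2.1) h
  have hfactor : (s - t) * (1 - s * t) = 0 := by
    field_simp at hwy
    linear_combination hwy
  rcases mul_eq_zero.mp hfactor with hst | hst
  · exact Or.inl (sub_eq_zero.mp hst)
  · exact Or.inr (sub_eq_zero.mp hst).symm

end DiagonalPoint

section Fibers

variable {n : ℕ} {u u' : ℂ × ℂ × ℂ × ℂ}

lemma fst_mul_snd_eq_of_pmap_eq (hu : u ∈ U) (hu' : u' ∈ U) (h : pmap n u = pmap n u') :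
    u.1 * u'.2.1 = u'.1 * u.2.1 := by
  have hwx : u.1 / u.2.1 = u'.1 / u'.2.1 := congrArg (fun v => v.2.1) h
  rwa [div_eq_div_iff hu.2.1 hu'.2.1] at hwx

lemma eq_of_pmap_eq_of_fst_eq (hu : u ∈ U) (hu' : u' ∈ U) (h : pmap n u = pmap n u')
    (hw : u.1 = u'.1) : u = u' := by
  have hx : u.2.1 = u'.2.1 := by
    have hwx := fst_mul_snd_eq_of_pmap_eq hu hu' h
    rw [hw] at hwx
    exact (mul_left_cancel₀ hu'.1 hwx).symm
  obtain ⟨-, -, -, -, hwy, hxz⟩ := hu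
  obtain ⟨-, -, -, -, hwy', hxz'⟩ := hu'
  have hy : u.2.2.1 = u'.2.2.1 := by linear_combination hwy - hwy' - hw
  have hz : u.2.2.2 = u'.2.2.2 := by linear_combination hxz - hxz' - hx
  exact Prod.ext hw (Prod.ext hx (Prod.ext hy hz))

lemma fst_add_fst_eq_one_of_pmap_eq (hu : u ∈ U) (hu' : u' ∈ U) (h : pmap n u = pmap n u')
    (hne : u ≠ u') : u.1 + u'.1 = 1 := by
  have hsub : u.1 - u'.1 ≠ 0 := sub_ne_zero.mpr (hne ∘ eq_of_pmap_eq_of_fst_eq hu hu' h)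
  have hwy : u.1 * u.2.2.1 = u'.1 * u'.2.2.1 := congrArg (fun v => v.2.2.1) h
  obtain ⟨-, -, -, -, hsum, -⟩ := hu
  obtain ⟨-, -, -, -, hsum', -⟩ := hu'
  apply mul_left_cancel₀ hsub
  linear_combination u.1 * hsum - u'.1 * hsum' - hwy

lemma snd_eq_fst_of_pmap_eq (hu : u ∈ U) (hu' : u' ∈ U) (h : pmap n u = pmap n u')
    (hne : u ≠ u') : u.2.1 = u.1 := by
  have hsub : u.1 - u'.1 ≠ 0 := sub_ne_zero.mpr (hne ∘ eq_of_pmap_eq_of_fst_eq hu hu' h)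
  have hww' : u.1 + u'.1 = 1 := fst_add_fst_eq_one_of_pmap_eq hu hu' h hne
  have hwx : u.1 * u'.2.1 = u'.1 * u.2.1 := fst_mul_snd_eq_of_pmap_eq hu hu' h
  have hwz : u.1 * u.2.2.2 = u'.1 * u'.2.2.2 := congrArg (fun v => v.2.2.2) h
  obtain ⟨-, -, -, -, -, hsum⟩ := hu
  obtain ⟨-, -, -, -, -, hsum'⟩ := hu'
  have hdiff : u.1 * (u.1 - u'.1) = u.2.1 * (u.1 ^ 2 - u'.1 ^ 2) := by
    linear_combination u.1 * hwz - u'.1 * hwx - u.1 ^ 2 * hsum + u.1 * u'.1 * hsum'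
  apply mul_left_cancel₀ hsub
  linear_combination -u.2.1 * (u.1 - u'.1) * hww' - hdiff

lemma exists_eq_diagonalPoint_of_pmap_eq (hu : u ∈ U) (hu' : u' ∈ U) (h : pmap n u = pmap n u')
    (hne : u ≠ u') : ∃ t : ℂ, t ^ n = 1 ∧ t ^ 2 ≠ 1 ∧ u = diagonalPoint t := by
  have hw' : u'.1 ≠ 0 := hu'.1
  have hw_ne : u.1 ≠ u'.1 := hne ∘ eq_of_pmap_eq_of_fst_eq hu hu' h
  have hww' : u.1 + u'.1 = 1 := fst_add_fst_eq_one_of_pmap_eq hu hu' h hne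
  have hx : u.2.1 = u.1 := snd_eq_fst_of_pmap_eq hu hu' h hne
  have hpow : u.1 ^ n = u'.1 ^ n := congrArg Prod.fst h
  obtain ⟨-, -, -, -, hwy, hxz⟩ := hu
  have hy : u.2.2.1 = u'.1 := by linear_combination hwy - hww'
  have hz : u.2.2.2 = u'.1 := by linear_combination hxz - hww' - hx
  have hden : 1 + u.1 / u'.1 = 1 / u'.1 := by rw [one_add_div hw', add_comm, hww']
  refine ⟨u.1 / u'.1, ?_, ?_, ?_⟩
  · rw [div_pow, hpow, div_self (pow_ne_zero n hw')]
  · have hw_ne_neg : u.1 ≠ -u'.1 := fun hneg => by simp [hneg] at hww'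
    rw [div_pow, Ne, div_eq_one_iff_eq (pow_ne_zero 2 hw'), sq_eq_sq_iff_eq_or_eq_neg]
    exact not_or.mpr ⟨hw_ne, hw_ne_neg⟩
  · have hfst : u.1 / u'.1 / (1 + u.1 / u'.1) = u.1 := by
      rw [hden, div_div_div_cancel_right₀ hw', div_one]
    have hlast : 1 / (1 + u.1 / u'.1) = u'.1 := by rw [hden, one_div_one_div]
    rw [diagonalPoint, hfst, hlast]
    exact Prod.ext rfl (Prod.ext hx (Prod.ext hy hz))

lemma nontrivial_fiber_pmap_iff {v : ℂ × ℂ × ℂ × ℂ} (hn : n ≠ 0) :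
    {u ∈ U | pmap n u = v}.Nontrivial ↔
      ∃ t : ℂ, t ^ n = 1 ∧ t ^ 2 ≠ 1 ∧ pmap n (diagonalPoint t) = v := by
  constructor
  · rintro ⟨u, ⟨hu, hv⟩, u', ⟨hu', hv'⟩, hne⟩
    obtain ⟨t, ht, ht2, rfl⟩ :=
      exists_eq_diagonalPoint_of_pmap_eq hu hu' (hv.trans hv'.symm) hne
    exact ⟨t, ht, ht2, hv⟩
  · rintro ⟨t, ht, ht2, hv⟩
    have ht0 : t ≠ 0 := ne_zero_pow hn (ht ▸ one_ne_zero)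
    have ht2' : t⁻¹ ^ 2 ≠ 1 := by rwa [inv_pow, Ne, inv_eq_one]
    exact ⟨diagonalPoint t, ⟨diagonalPoint_mem_U ht0 (one_add_ne_zero_of_sq_ne_one_s14 ht2), hv⟩,
      diagonalPoint t⁻¹,
      ⟨diagonalPoint_mem_U (inv_ne_zero ht0) (one_add_ne_zero_of_sq_ne_one_s14 ht2'),
        (pmap_diagonalPoint_inv ht).trans hv⟩,
      diagonalPoint_ne_diagonalPoint_inv ht0 ht2⟩

end Fibers

section MultiplePoints

variable {n : ℕ} {ξ : ℂ}

lemma multiple_points_eq_image_P (hn : n ≠ 0) (hξ : IsPrimitiveRoot ξ n) :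
    {v ∈ pmap n '' U | {u ∈ U | pmap n u = v}.Nontrivial} =
      (fun i => pmap n (P ξ i)) '' Set.Icc 1 ((n - 1) / 2) := by
  ext v
  constructor
  · rintro ⟨-, hv⟩
    obtain ⟨t, ht, ht2, rfl⟩ := (nontrivial_fiber_pmap_iff hn).mp hv
    obtain ⟨i, hi, rfl | hti⟩ := exists_mem_Icc_half_pow_eq_or_mul_pow_eq_one hn hξ ht ht2
    · exact ⟨i, hi, rfl⟩
    · refine ⟨i, hi, ?_⟩
      simp only [P_eq_diagonalPoint, eq_inv_of_mul_eq_one_right hti, pmap_diagonalPoint_inv ht]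
  · rintro ⟨i, hi, rfl⟩
    have hroot : (ξ ^ i) ^ n = 1 := by rw [pow_right_comm, hξ.pow_eq_one, one_pow]
    have hfiber : {u ∈ U | pmap n u = pmap n (P ξ i)}.Nontrivial :=
      (nontrivial_fiber_pmap_iff hn).mpr
        ⟨ξ ^ i, hroot, sq_pow_ne_one_of_mem_Icc_half hξ hi, rfl⟩
    exact ⟨hfiber.nonempty, hfiber⟩

lemma injOn_pmap_P (hξ : IsPrimitiveRoot ξ n) :
    Set.InjOn (fun i => pmap n (P ξ i)) (Set.Icc 1 ((n - 1) / 2)) := by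
  intro i hi j hj h
  have one_add_pow_ne_zero : ∀ k ∈ Set.Icc 1 ((n - 1) / 2), 1 + ξ ^ k ≠ 0 := fun k hk =>
    one_add_ne_zero_of_sq_ne_one_s14 (sq_pow_ne_one_of_mem_Icc_half hξ hk)
  exact eq_of_pow_eq_or_mul_pow_eq_one hξ hi hj
    (eq_or_mul_eq_one_of_pmap_diagonalPoint_eq (one_add_pow_ne_zero i hi)
      (one_add_pow_ne_zero j hj) h)

end MultiplePoints

theorem multiple_point_set_general (n : ℕ) (hpos : 0 < n) (ξ : ℂ) (hξ : IsPrimitiveRoot ξ n) :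
    {v ∈ pmap n '' U | {u ∈ U | pmap n u = v}.Nontrivial} =
      (fun i => pmap n (P ξ i)) '' Set.Icc 1 ((n - 1) / 2) ∧
    {v ∈ pmap n '' U | {u ∈ U | pmap n u = v}.Nontrivial}.ncard = (n - 1) / 2 := by
  have himage := multiple_points_eq_image_P hpos.ne' hξ
  refine ⟨himage, ?_⟩
  rw [himage, (injOn_pmap_P hξ).ncard_image, Set.ncard_eq_toFinset_card', Set.toFinset_Icc,
    Nat.card_Icc, Nat.add_sub_cancel]

/-- Let `n` be an odd positive integer and `ξ` a primitive `n`-th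
root of unity. Then the set of points of `U_n = p_n(U)` having at least two
preimages in `U` under `p_n` is exactly `{p_n(P_i) : 1 ≤ i ≤ (n-1)/2}`, and this
set has exactly `(n-1)/2` elements. -/
theorem multiple_point_set (n : ℕ) (hpos : 0 < n) (hodd : Odd n) (ξ : ℂ)
    (hξ : IsPrimitiveRoot ξ n) :
    {v ∈ pmap n '' U | {u ∈ U | pmap n u = v}.Nontrivial} =
      (fun i => pmap n (P ξ i)) '' Set.Icc 1 ((n - 1) / 2) ∧
    {v ∈ pmap n '' U | {u ∈ U | pmap n u = v}.Nontrivial}.ncard = (n - 1) / 2 :=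
  multiple_point_set_general n hpos ξ hξ
end
end

section
/- Let n be an odd positive integer, ξ ∈ ℂ a primitive n-th root of unity, and g = (ξ, ξ, ξ^{-1}, ξ^{-1}) ∈ (ℂ*)^4. Then for every v ∈ U, the fiber of p_n through v intersected with U, namely {u ∈ U : p_n(u) = p_n(v)}, has either exactly one or exactly two elements, and it has two elements if and only if v = P_i for some 1 ≤ i ≤ n−1. -/
noncomputable section

/-!
The involution `σ(w, x, y, z) = (y, z, w, x)` preserves `U`. A point of `U` is determined by
`(w, x)`, and preserving `w * y = w * (1 - w)` leaves only `w` and `1 - w` as possible first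
coordinates; the other coordinates of `p_n` then show that the fiber through `v` is contained in
`{v, σ v}`. So it has two elements exactly when `σ v ≠ v` and `p_n (σ v) = p_n v`, that is, when
`x = w` and `w / y` is a nontrivial `n`-th root of unity `ξ ^ i`, which says `v = P_i`.
-/

lemma ncard_eq_one_or_two_of_mem_of_subset_pair {α : Type*} {s : Set α} {a b : α} (ha : a ∈ s)
    (hs : s ⊆ {a, b}) : s.ncard = 1 ∨ s.ncard = 2 := by
  have hpos : 0 < s.ncard := (Set.ncard_pos ((Set.toFinite {a, b}).subset hs)).2 ⟨a, ha⟩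
  have hle : s.ncard ≤ 2 :=
    (Set.ncard_le_ncard hs).trans (by simpa using Set.ncard_insert_le a {b})
  omega

lemma ncard_eq_two_iff_of_mem_of_subset_pair {α : Type*} {s : Set α} {a b : α} (ha : a ∈ s)
    (hs : s ⊆ {a, b}) : s.ncard = 2 ↔ b ≠ a ∧ b ∈ s := by
  constructor
  · intro hcard
    have hsub : ¬ s ⊆ {a} := fun h ↦ by
      have := Set.ncard_le_ncard h
      simp [hcard] at this
    obtain ⟨c, hc, hca⟩ := Set.not_subset.1 hsub
    obtain rfl : c = b := (hs hc).resolve_left hca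
    exact ⟨hca, hc⟩
  · rintro ⟨hba, hb⟩
    rw [hs.antisymm (Set.pair_subset ha hb), Set.ncard_pair hba.symm]

lemma eq_div_one_add_and_eq_iff {K : Type*} [Field K] {w y c : K} (h : w + y = 1) :
    w = c / (1 + c) ∧ y = 1 / (1 + c) ↔ w = c * y := by
  constructor
  · rintro ⟨hw, hy⟩
    rw [hw, hy, mul_one_div]
  · intro hw
    have hmul : y * (1 + c) = 1 := by linear_combination h - hw
    have hy : y = 1 / (1 + c) := eq_one_div_of_mul_eq_one_left hmul
    exact ⟨by rw [hw, hy, mul_one_div], hy⟩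

lemma exists_eq_pow_mul_iff_pow_eq_pow {R : Type*} [CommRing R] [IsDomain R] {n : ℕ} {ξ : R}
    (hn : 0 < n) (hξ : IsPrimitiveRoot ξ n) {w y : R} :
    (∃ i < n, w = ξ ^ i * y) ↔ w ^ n = y ^ n := by
  rw [← Polynomial.mem_nthRoots hn, hξ.nthRoots_eq rfl]
  simp [eq_comm]

lemma exists_pos_eq_pow_mul_iff {R : Type*} [CommRing R] [IsDomain R] {n : ℕ} {ξ : R}
    (hn : 0 < n) (hξ : IsPrimitiveRoot ξ n) {w y : R} (hy : y ≠ 0) :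
    (∃ i, 1 ≤ i ∧ i ≤ n - 1 ∧ w = ξ ^ i * y) ↔ w ≠ y ∧ w ^ n = y ^ n := by
  rw [← exists_eq_pow_mul_iff_pow_eq_pow hn hξ]
  constructor
  · rintro ⟨i, hi, hin, rfl⟩
    have hξi : ξ ^ i ≠ 1 := hξ.pow_ne_one_of_pos_of_lt (by omega) (by omega)
    exact ⟨fun h ↦ hξi (mul_eq_right₀ hy |>.1 h), i, by omega, rfl⟩
  · rintro ⟨hwy, i, hin, rfl⟩
    have hi : i ≠ 0 := by
      rintro rfl
      simp at hwy
    exact ⟨i, by omega, by omega, rfl⟩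

/-- The involution `(w, x, y, z) ↦ (y, z, w, x)`, which preserves `U` and supplies the only
possible second point of a fiber of `p_n` on `U`. -/
def exchange (v : ℂ × ℂ × ℂ × ℂ) : ℂ × ℂ × ℂ × ℂ :=
  (v.2.2.1, v.2.2.2, v.1, v.2.1)

lemma exchange_mem_U {v : ℂ × ℂ × ℂ × ℂ} (hv : v ∈ U) : exchange v ∈ U := by
  obtain ⟨hw, hx, hy, hz, hwy, hxz⟩ := hv
  exact ⟨hy, hz, hw, hx, by rwa [add_comm], by rwa [add_comm]⟩

lemma eq_or_eq_exchange_of_pmap_eq {n : ℕ} {u v : ℂ × ℂ × ℂ × ℂ} (hu : u ∈ U) (hv : v ∈ U)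
    (h : pmap n u = pmap n v) : u = v ∨ u = exchange v := by
  obtain ⟨a, b, c, d⟩ := u
  obtain ⟨w, x, y, z⟩ := v
  obtain ⟨ha, hb, -, -, hac, hbd⟩ := hu
  obtain ⟨hw, hx, -, -, hwy, hxz⟩ := hv
  simp only [pmap, exchange, Prod.mk.injEq] at *
  obtain ⟨-, hdiv, hmul_y, hmul_z⟩ := h
  obtain rfl : c = 1 - a := by linear_combination hac
  obtain rfl : d = 1 - b := by linear_combination hbd
  obtain rfl : y = 1 - w := by linear_combination hwy
  obtain rfl : z = 1 - x := by linear_combination hxz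
  have hcross : a * x = w * b := (div_eq_div_iff hb hx).1 hdiv
  obtain rfl | haw := eq_or_ne a w
  · obtain rfl : x = b := mul_left_cancel₀ ha hcross
    simp
  · have haw' : a - w ≠ 0 := sub_ne_zero.2 haw
    obtain rfl : a = 1 - w := mul_left_cancel₀ haw' (by linear_combination -hmul_y)
    obtain rfl : x = w :=
      mul_left_cancel₀ haw' (by linear_combination (-w) * hmul_z + (1 - w) * hcross)
    obtain rfl : b = 1 - x := mul_left_cancel₀ hw (by linear_combination -hcross)
    simp

lemma fiber_subset_pair (n : ℕ) {v : ℂ × ℂ × ℂ × ℂ} (hv : v ∈ U) :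
    {u ∈ U | pmap n u = pmap n v} ⊆ {v, exchange v} :=
  fun _ hu ↦ eq_or_eq_exchange_of_pmap_eq hu.1 hv hu.2

lemma pmap_exchange_eq_iff {n : ℕ} {w x y z : ℂ} (hv : (w, x, y, z) ∈ U) :
    pmap n (exchange (w, x, y, z)) = pmap n (w, x, y, z) ↔ x = w ∧ w ^ n = y ^ n := by
  obtain ⟨-, hx, hy, hz, hwy, hxz⟩ := hv
  simp only [pmap, exchange, Prod.mk.injEq] at *
  constructor
  · rintro ⟨hpow, hdiv, -, -⟩
    have hcross : y * x = w * z := (div_eq_div_iff hz hx).1 hdiv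
    exact ⟨by linear_combination hcross - x * hwy + w * hxz, hpow.symm⟩
  · rintro ⟨rfl, hpow⟩
    obtain rfl : y = z := by linear_combination hwy - hxz
    exact ⟨hpow.symm, by rw [div_self hy, div_self hx], mul_comm _ _, mul_comm _ _⟩

lemma exchange_eq_self_iff {w y : ℂ} : exchange (w, w, y, y) = (w, w, y, y) ↔ w = y := by
  simp [exchange, eq_comm]

lemma exchange_ne_and_pmap_eq_iff {n : ℕ} {w x y z : ℂ} (hv : (w, x, y, z) ∈ U) :
    exchange (w, x, y, z) ≠ (w, x, y, z) ∧ pmap n (exchange (w, x, y, z)) = pmap n (w, x, y, z) ↔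
      x = w ∧ w ≠ y ∧ w ^ n = y ^ n := by
  rw [pmap_exchange_eq_iff hv, and_left_comm]
  refine and_congr_right ?_
  rintro rfl
  obtain ⟨-, -, -, -, hwy, hxz⟩ := hv
  obtain rfl : y = z := add_left_cancel (hwy.trans hxz.symm)
  rw [Ne, exchange_eq_self_iff]

lemma eq_P_iff {ξ : ℂ} {i : ℕ} {w x y z : ℂ} (hwy : w + y = 1) (hxz : x + z = 1) :
    (w, x, y, z) = P ξ i ↔ x = w ∧ w = ξ ^ i * y := by
  constructor
  · intro h
    simp only [P, Prod.mk.injEq] at h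
    obtain ⟨hw, hx, hy, -⟩ := h
    exact ⟨hx.trans hw.symm, (eq_div_one_add_and_eq_iff hwy).1 ⟨hw, hy⟩⟩
  · rintro ⟨rfl, hw⟩
    obtain rfl : y = z := add_left_cancel (hwy.trans hxz.symm)
    obtain ⟨hx, hy⟩ := (eq_div_one_add_and_eq_iff hwy).2 hw
    simp only [P, ← hx, ← hy]

lemma exists_eq_P_iff {n : ℕ} {ξ : ℂ} (hn : 0 < n) (hξ : IsPrimitiveRoot ξ n) {w x y z : ℂ}
    (hv : (w, x, y, z) ∈ U) :
    (∃ i : ℕ, 1 ≤ i ∧ i ≤ n - 1 ∧ (w, x, y, z) = P ξ i) ↔ x = w ∧ w ≠ y ∧ w ^ n = y ^ n := by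
  obtain ⟨-, -, hy, -, hwy, hxz⟩ := hv
  rw [← exists_pos_eq_pow_mul_iff hn hξ hy]
  simp only [eq_P_iff hwy hxz, and_left_comm (b := x = w), exists_and_left]

/-- For even `n`, the point `P ξ (n / 2)` has zero denominators; Lean's value for it is
`(0, 0, 0, 0)`, which does not lie in `U`. -/
theorem fiber_card_one_or_two_general (n : ℕ) (hpos : 0 < n) (ξ : ℂ)
    (hξ : IsPrimitiveRoot ξ n) (v : ℂ × ℂ × ℂ × ℂ) (hv : v ∈ U) :
    ({u ∈ U | pmap n u = pmap n v}.ncard = 1 ∨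
      {u ∈ U | pmap n u = pmap n v}.ncard = 2) ∧
    ({u ∈ U | pmap n u = pmap n v}.ncard = 2 ↔
      ∃ i : ℕ, 1 ≤ i ∧ i ≤ n - 1 ∧ v = P ξ i) := by
  have hmem : v ∈ {u ∈ U | pmap n u = pmap n v} := ⟨hv, rfl⟩
  have hsub := fiber_subset_pair n hv
  refine ⟨ncard_eq_one_or_two_of_mem_of_subset_pair hmem hsub, ?_⟩
  calc {u ∈ U | pmap n u = pmap n v}.ncard = 2
      ↔ exchange v ≠ v ∧ exchange v ∈ {u ∈ U | pmap n u = pmap n v} :=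
        ncard_eq_two_iff_of_mem_of_subset_pair hmem hsub
    _ ↔ exchange v ≠ v ∧ pmap n (exchange v) = pmap n v :=
        and_congr_right' (and_iff_right (exchange_mem_U hv))
    _ ↔ v.2.1 = v.1 ∧ v.1 ≠ v.2.2.1 ∧ v.1 ^ n = v.2.2.1 ^ n := exchange_ne_and_pmap_eq_iff hv
    _ ↔ ∃ i : ℕ, 1 ≤ i ∧ i ≤ n - 1 ∧ v = P ξ i := (exists_eq_P_iff hpos hξ hv).symm

/-- Let `n` be an odd positive integer and `ξ` a primitive `n`-th
root of unity. Then for every `v ∈ U`, the fiber of `p_n` through `v`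
intersected with `U`, namely `{u ∈ U : p_n(u) = p_n(v)}`, has either exactly one
or exactly two elements, and it has two elements if and only if `v = P_i` for
some `1 ≤ i ≤ n - 1`. -/
theorem fiber_card_one_or_two (n : ℕ) (hpos : 0 < n) (hodd : Odd n) (ξ : ℂ)
    (hξ : IsPrimitiveRoot ξ n) (v : ℂ × ℂ × ℂ × ℂ) (hv : v ∈ U) :
    ({u ∈ U | pmap n u = pmap n v}.ncard = 1 ∨
      {u ∈ U | pmap n u = pmap n v}.ncard = 2) ∧
    ({u ∈ U | pmap n u = pmap n v}.ncard = 2 ↔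
      ∃ i : ℕ, 1 ≤ i ∧ i ≤ n - 1 ∧ v = P ξ i) := by
  exact fiber_card_one_or_two_general n hpos ξ hξ v hv
end
end
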